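/- Let F be an invertible 2×2 complex matrix with F·F̄ = ±1, where F̄ denotes the entrywise complex conjugate. Then there exist a unitary 2×2 matrix v and a real number q with −1 ≤ q ≤ 1, q ≠ 0, such that F = v·F_q·vᵗ, where F_q is the 2×2 matrix with first row (0, |q|^{1/2}) and second row (−sgn(q)·|q|^{−1/2}, 0). Moreover, the number q is uniquely determined by F. -/

import Mathlib

open Matrix

/-- For `q ∈ [-1,1] \ {0}`, the standard matrix
`F_q = [[0, |q|^{1/2}], [-sgn(q) |q|^{-1/2}, 0]]`. -/
noncomputable def Fq (q : ℝ) : Matrix (Fin 2) (Fin 2) ℂ :=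
  !![0, ((Real.sqrt |q| : ℝ) : ℂ);
     ((-Real.sign q * (Real.sqrt |q|)⁻¹ : ℝ) : ℂ), 0]

/-- Unitary congruence `F = v G vᵗ` of `2 × 2` complex matrices. -/
def UnitaryCongruent (F G : Matrix (Fin 2) (Fin 2) ℂ) : Prop :=
  ∃ v : Matrix (Fin 2) (Fin 2) ℂ, vᴴ * v = 1 ∧ F = v * G * vᵀ

theorem UnitaryCongruent.trans {F G H : Matrix (Fin 2) (Fin 2) ℂ}
    (hFG : UnitaryCongruent F G) (hGH : UnitaryCongruent G H) : UnitaryCongruent F H := by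
  obtain ⟨v, hv, rfl⟩ := hFG
  obtain ⟨w, hw, rfl⟩ := hGH
  refine ⟨v * w, ?_, ?_⟩
  · rw [conjTranspose_mul, Matrix.mul_assoc, ← Matrix.mul_assoc vᴴ, hv, Matrix.one_mul, hw]
  · simp only [transpose_mul, Matrix.mul_assoc]

theorem UnitaryCongruent.of_conj {F w : Matrix (Fin 2) (Fin 2) ℂ} (hw : wᴴ * w = 1) :
    UnitaryCongruent F (wᴴ * F * wᴴᵀ) := by
  refine ⟨w, hw, ?_⟩
  have hw' : w * wᴴ = 1 := mul_eq_one_comm.mp hw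
  have ht : wᴴᵀ * wᵀ = 1 := by rw [← transpose_mul, hw', transpose_one]
  calc F = (w * wᴴ) * F * (wᴴᵀ * wᵀ) := by rw [hw', ht, Matrix.one_mul, Matrix.mul_one]
    _ = _ := by simp only [Matrix.mul_assoc]

theorem mul_map_conj_of_congr {G v : Matrix (Fin 2) (Fin 2) ℂ} (hv : vᴴ * v = 1) :
    (v * G * vᵀ) * (v * G * vᵀ).map (starRingEnd ℂ) =
      v * (G * G.map (starRingEnd ℂ)) * vᴴ := by
  have ht : vᵀ * v.map (starRingEnd ℂ) = 1 := by
    have := congrArg transpose hv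
    rwa [transpose_mul, transpose_one] at this
  have hm : vᵀ.map (starRingEnd ℂ) = vᴴ := rfl
  rw [Matrix.map_mul, Matrix.map_mul, hm]
  calc _ = v * G * (vᵀ * v.map (starRingEnd ℂ)) * G.map (starRingEnd ℂ) * vᴴ := by
        simp only [Matrix.mul_assoc]
    _ = _ := by rw [ht, Matrix.mul_one]; simp only [Matrix.mul_assoc]

theorem mul_conjTranspose_of_congr {G v : Matrix (Fin 2) (Fin 2) ℂ} (hv : vᴴ * v = 1) :
    (v * G * vᵀ) * (v * G * vᵀ)ᴴ = v * (G * Gᴴ) * vᴴ := by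
  have ht : vᵀ * vᵀᴴ = 1 := by
    have := congrArg transpose hv
    rwa [transpose_mul, transpose_one] at this
  rw [conjTranspose_mul, conjTranspose_mul]
  calc _ = v * G * (vᵀ * vᵀᴴ) * Gᴴ * vᴴ := by simp only [Matrix.mul_assoc]
    _ = _ := by rw [ht, Matrix.mul_one]; simp only [Matrix.mul_assoc]

theorem trace_conj_of_unitary {v : Matrix (Fin 2) (Fin 2) ℂ} (hv : vᴴ * v = 1)
    (A : Matrix (Fin 2) (Fin 2) ℂ) : (v * A * vᴴ).trace = A.trace := by
  rw [trace_mul_comm, ← Matrix.mul_assoc, hv, Matrix.one_mul]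

theorem UnitaryCongruent.trace_mul_map_conj {F G : Matrix (Fin 2) (Fin 2) ℂ}
    (h : UnitaryCongruent F G) :
    (F * F.map (starRingEnd ℂ)).trace = (G * G.map (starRingEnd ℂ)).trace := by
  obtain ⟨v, hv, rfl⟩ := h
  rw [mul_map_conj_of_congr hv, trace_conj_of_unitary hv]

theorem UnitaryCongruent.trace_mul_conjTranspose {F G : Matrix (Fin 2) (Fin 2) ℂ}
    (h : UnitaryCongruent F G) : (F * Fᴴ).trace = (G * Gᴴ).trace := by
  obtain ⟨v, hv, rfl⟩ := h
  rw [mul_conjTranspose_of_congr hv, trace_conj_of_unitary hv]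

theorem UnitaryCongruent.mul_map_conj_eq_smul {F G : Matrix (Fin 2) (Fin 2) ℂ}
    (h : UnitaryCongruent F G) {c : ℂ}
    (hF : F * F.map (starRingEnd ℂ) = c • (1 : Matrix (Fin 2) (Fin 2) ℂ)) :
    G * G.map (starRingEnd ℂ) = c • (1 : Matrix (Fin 2) (Fin 2) ℂ) := by
  obtain ⟨v, hv, rfl⟩ := h
  rw [mul_map_conj_of_congr hv] at hF
  calc G * G.map (starRingEnd ℂ)
      = (vᴴ * v) * (G * G.map (starRingEnd ℂ)) * (vᴴ * v) := by
        rw [hv, Matrix.one_mul, Matrix.mul_one]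
    _ = vᴴ * (v * (G * G.map (starRingEnd ℂ)) * vᴴ) * v := by simp only [Matrix.mul_assoc]
    _ = _ := by rw [hF, Matrix.mul_smul, Matrix.smul_mul, Matrix.mul_one, hv]

/-- A complex binary quadratic form has a nontrivial zero. -/
theorem exists_binary_quadratic_zero (a b c : ℂ) :
    ∃ x y : ℂ, (x ≠ 0 ∨ y ≠ 0) ∧ a * x ^ 2 + b * (x * y) + c * y ^ 2 = 0 := by
  by_cases ha : a = 0
  · exact ⟨1, 0, by simp, by simp [ha]⟩
  · obtain ⟨s, hs⟩ := IsAlgClosed.exists_eq_mul_self (discrim a b c)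
    obtain ⟨x, hx⟩ := exists_quadratic_eq_zero ha ⟨s, hs⟩
    exact ⟨x, 1, by simp, by linear_combination hx⟩

/-- A complex binary quadratic form has a zero on the unit sphere. -/
theorem exists_unit_binary_quadratic_zero (a b c : ℂ) :
    ∃ x y : ℂ, x * star x + y * star y = 1 ∧ a * x ^ 2 + b * (x * y) + c * y ^ 2 = 0 := by
  obtain ⟨x, y, hxy, h0⟩ := exists_binary_quadratic_zero a b c
  have hpos : 0 < ‖x‖ ^ 2 + ‖y‖ ^ 2 := by
    rcases hxy with hx | hy
    · have := norm_pos_iff.mpr hx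
      positivity
    · have := norm_pos_iff.mpr hy
      positivity
  set r : ℝ := Real.sqrt (‖x‖ ^ 2 + ‖y‖ ^ 2) with hr
  have hr0 : (r : ℂ) ≠ 0 := by exact_mod_cast (Real.sqrt_pos.mpr hpos).ne'
  have hr2 : (r : ℂ) ^ 2 = x * star x + y * star y := by
    have : r ^ 2 = ‖x‖ ^ 2 + ‖y‖ ^ 2 := Real.sq_sqrt hpos.le
    simp only [Complex.star_def, Complex.mul_conj']
    exact_mod_cast this
  refine ⟨x / r, y / r, ?_, ?_⟩
  · simp only [star_div₀, Complex.star_def, Complex.conj_ofReal] at hr2 ⊢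
    field_simp
    linear_combination -hr2
  · field_simp
    linear_combination h0

/-- Every matrix is unitarily congruent to one with vanishing top-left entry. -/
theorem exists_unitaryCongruent_apply_zero_zero (F : Matrix (Fin 2) (Fin 2) ℂ) :
    ∃ G, UnitaryCongruent F G ∧ G 0 0 = 0 := by
  obtain ⟨x, y, hxy, h0⟩ :=
    exists_unit_binary_quadratic_zero (F 0 0) (F 0 1 + F 1 0) (F 1 1)
  refine ⟨_, UnitaryCongruent.of_conj (w := !![star x, -y; star y, x]) ?_, ?_⟩
  · simp only [Complex.star_def] at hxy ⊢
    ext i j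
    fin_cases i <;> fin_cases j <;> simp [Matrix.mul_apply, Fin.sum_univ_two]
    · linear_combination hxy
    · ring
    · ring
    · linear_combination hxy
  · simp [Matrix.mul_apply, Fin.sum_univ_two]
    linear_combination h0

theorem unitaryCongruent_phase {b c p : ℂ} (hp : star p * p = 1) :
    UnitaryCongruent !![0, p * b; p * c, 0] !![0, b; c, 0] := by
  refine ⟨!![1, 0; 0, p], ?_, ?_⟩
  · ext i j
    fin_cases i <;> fin_cases j <;> simp [Matrix.mul_apply, Fin.sum_univ_two] at hp ⊢
    exact hp
  · ext i j
    fin_cases i <;> fin_cases j <;> simp [Matrix.mul_apply, Fin.sum_univ_two, mul_comm]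

theorem unitaryCongruent_swap (b c : ℂ) :
    UnitaryCongruent !![0, b; c, 0] !![0, c; b, 0] := by
  refine ⟨!![0, 1; 1, 0], ?_, ?_⟩ <;> ext i j <;>
    fin_cases i <;> fin_cases j <;> simp [Matrix.mul_apply, Fin.sum_univ_two]

/-- If `F F̄ = ε` with `ε ≠ 0` real, then `F` is unitarily congruent to an antidiagonal matrix with
real entries `r` and `ε / r`. -/
theorem exists_unitaryCongruent_antidiagonal {F : Matrix (Fin 2) (Fin 2) ℂ} {ε : ℝ} (hε : ε ≠ 0)
    (hF : F * F.map (starRingEnd ℂ) = (ε : ℂ) • (1 : Matrix (Fin 2) (Fin 2) ℂ)) :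
    ∃ r : ℝ, 0 < r ∧ UnitaryCongruent F !![0, (r : ℂ); ((ε * r⁻¹ : ℝ) : ℂ), 0] := by
  obtain ⟨G, hFG, hG⟩ := exists_unitaryCongruent_apply_zero_zero F
  have hGG := hFG.mul_map_conj_eq_smul hF
  have h00 := congrFun (congrFun hGG 0) 0
  have h01 := congrFun (congrFun hGG 0) 1
  simp [Matrix.mul_apply, Fin.sum_univ_two, hG] at h00 h01
  have hb : G 0 1 ≠ 0 := by
    intro hb
    rw [hb, zero_mul] at h00
    exact hε (by exact_mod_cast h00.symm)
  have hd : G 1 1 = 0 := h01.resolve_left hb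
  have hr : (‖G 0 1‖ : ℂ) ≠ 0 := by exact_mod_cast (norm_pos_iff.mpr hb).ne'
  have hc : star (G 0 1) * G 1 0 = ε := by
    have := congrArg (starRingEnd ℂ) h00
    simpa using this
  have hn : star (G 0 1) * G 0 1 = (‖G 0 1‖ : ℂ) ^ 2 := by
    simpa using Complex.conj_mul' (G 0 1)
  refine ⟨‖G 0 1‖, norm_pos_iff.mpr hb, hFG.trans ?_⟩
  have hp : star (G 0 1 / ‖G 0 1‖) * (G 0 1 / ‖G 0 1‖) = 1 := by
    simp only [star_div₀, Complex.star_def, Complex.conj_ofReal] at hn ⊢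
    field_simp
    exact hn
  convert unitaryCongruent_phase (b := (‖G 0 1‖ : ℂ)) (c := ((ε * ‖G 0 1‖⁻¹ : ℝ) : ℂ)) hp using 1
  ext i j
  fin_cases i <;> fin_cases j
  · simpa using hG
  · simp [hr]
  · simp only [Fin.mk_one, Fin.zero_eta, Matrix.of_apply, Matrix.cons_val_one,
      Matrix.cons_val_zero]
    push_cast
    rw [← hc]
    field_simp
    linear_combination -(G 1 0) * hn
  · simpa using hd

theorem Fq_neg_mul_sq {ε r : ℝ} (hε : ε = 1 ∨ ε = -1) (hr : 0 < r) :
    Fq (-ε * r ^ 2) = !![0, (r : ℂ); ((ε * r⁻¹ : ℝ) : ℂ), 0] := by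
  have hr2 : 0 < r ^ 2 := by positivity
  rcases hε with rfl | rfl
  · simp [Fq, Real.sign_of_neg (neg_neg_of_pos hr2), Real.sqrt_sq hr.le]
  · simp [Fq, Real.sign_of_pos hr2, Real.sqrt_sq hr.le]

theorem exists_unitaryCongruent_Fq {F : Matrix (Fin 2) (Fin 2) ℂ} {ε : ℝ}
    (hε : ε = 1 ∨ ε = -1)
    (hF : F * F.map (starRingEnd ℂ) = (ε : ℂ) • (1 : Matrix (Fin 2) (Fin 2) ℂ)) :
    ∃ q : ℝ, -1 ≤ q ∧ q ≤ 1 ∧ q ≠ 0 ∧ UnitaryCongruent F (Fq q) := by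
  have hε0 : ε ≠ 0 := by rcases hε with rfl | rfl <;> norm_num
  obtain ⟨r, hr, hFr⟩ := exists_unitaryCongruent_antidiagonal hε0 hF
  obtain ⟨s, hs, hs1, hFs⟩ : ∃ s : ℝ, 0 < s ∧ s ≤ 1 ∧
      UnitaryCongruent F !![0, (s : ℂ); ((ε * s⁻¹ : ℝ) : ℂ), 0] := by
    rcases le_total r 1 with h1 | h1
    · exact ⟨r, hr, h1, hFr⟩
    · refine ⟨r⁻¹, inv_pos.mpr hr, inv_le_one_of_one_le₀ h1,
        (hFr.trans (unitaryCongruent_swap _ _)).trans ?_⟩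
      have hp : star (ε : ℂ) * ε = 1 := by rcases hε with rfl | rfl <;> simp
      have hee : (ε : ℂ) * ε = 1 := by simpa using hp
      convert unitaryCongruent_phase (b := ((r⁻¹ : ℝ) : ℂ)) (c := ((ε * r⁻¹⁻¹ : ℝ) : ℂ)) hp using 1
      push_cast
      rw [← mul_assoc, hee]
      simp
  have hs2 : s ^ 2 ≤ 1 := pow_le_one₀ hs.le hs1
  have hs0 : 0 < s ^ 2 := by positivity
  refine ⟨-ε * s ^ 2, ?_, ?_, mul_ne_zero (neg_ne_zero.mpr hε0) hs0.ne', ?_⟩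
  · rcases hε with rfl | rfl <;> linarith
  · rcases hε with rfl | rfl <;> linarith
  · rwa [Fq_neg_mul_sq hε hs]

theorem trace_Fq_mul_map_conj {q : ℝ} (hq : q ≠ 0) :
    (Fq q * (Fq q).map (starRingEnd ℂ)).trace = ((-2 * Real.sign q : ℝ) : ℂ) := by
  have h : (Real.sqrt |q| : ℂ) ≠ 0 := by
    exact_mod_cast (Real.sqrt_pos.mpr (abs_pos.mpr hq)).ne'
  rw [Matrix.trace_fin_two, Matrix.mul_apply, Matrix.mul_apply]
  simp [Fq, Fin.sum_univ_two]
  field_simp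
  ring

theorem trace_Fq_mul_conjTranspose {q : ℝ} (hq : q ≠ 0) :
    (Fq q * (Fq q)ᴴ).trace = ((|q| + |q|⁻¹ : ℝ) : ℂ) := by
  have h2 : Real.sqrt |q| * Real.sqrt |q| = |q| := Real.mul_self_sqrt (abs_nonneg q)
  have hs : Real.sign q * Real.sign q = 1 := by
    rcases Real.sign_apply_eq_of_ne_zero q hq with h | h <;> rw [h] <;> norm_num
  have key : Real.sqrt |q| * Real.sqrt |q| +
      (Real.sign q * (Real.sqrt |q|)⁻¹) * (Real.sign q * (Real.sqrt |q|)⁻¹) = |q| + |q|⁻¹ := by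
    rw [mul_mul_mul_comm, hs, ← mul_inv, h2, one_mul]
  rw [← key, Matrix.trace_fin_two, Matrix.mul_apply, Matrix.mul_apply]
  simp [Fq, Fin.sum_univ_two]
  exact_mod_cast h2

theorem eq_of_add_inv_eq {s t : ℝ} (hs : 0 < s) (hs1 : s ≤ 1) (ht : 0 < t) (ht1 : t ≤ 1)
    (h : s + s⁻¹ = t + t⁻¹) : s = t := by
  field_simp at h
  have h' : (s - t) * (s * t - 1) = 0 := by linear_combination h
  rcases mul_eq_zero.mp h' with h | h <;> nlinarith

theorem eq_of_unitaryCongruent_Fq {F : Matrix (Fin 2) (Fin 2) ℂ} {p q : ℝ}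
    (hp : |p| ≤ 1) (hp0 : p ≠ 0) (hq : |q| ≤ 1) (hq0 : q ≠ 0)
    (hFp : UnitaryCongruent F (Fq p)) (hFq : UnitaryCongruent F (Fq q)) : p = q := by
  have hsign : Real.sign p = Real.sign q := by
    have h := hFp.trace_mul_map_conj.symm.trans hFq.trace_mul_map_conj
    rw [trace_Fq_mul_map_conj hp0, trace_Fq_mul_map_conj hq0] at h
    have h' : -2 * Real.sign p = -2 * Real.sign q := by exact_mod_cast h
    linarith
  have habs : |p| = |q| := by
    have h := hFp.trace_mul_conjTranspose.symm.trans hFq.trace_mul_conjTranspose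
    rw [trace_Fq_mul_conjTranspose hp0, trace_Fq_mul_conjTranspose hq0] at h
    exact eq_of_add_inv_eq (abs_pos.mpr hp0) hp (abs_pos.mpr hq0) hq (by exact_mod_cast h)
  rcases lt_or_gt_of_ne hp0 with h1 | h1 <;> rcases lt_or_gt_of_ne hq0 with h2 | h2 <;>
    simp only [Real.sign_of_neg, Real.sign_of_pos, abs_of_neg, abs_of_pos, h1, h2] at hsign habs <;>
    linarith

/-- Every invertible `2 × 2` complex matrix `F` with `F ⬝ F̄ = ±1` is of the form
`v ⬝ F_q ⬝ vᵗ` with `v` unitary and `q ∈ [-1,1] \ {0}`, and `q` is uniquely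
determined by `F`. -/
theorem stmt_7 (F : Matrix (Fin 2) (Fin 2) ℂ) (hF : IsUnit F)
    (h : F * F.map (starRingEnd ℂ) = (1 : Matrix (Fin 2) (Fin 2) ℂ) ∨
         F * F.map (starRingEnd ℂ) = -(1 : Matrix (Fin 2) (Fin 2) ℂ)) :
    ∃! q : ℝ, -1 ≤ q ∧ q ≤ 1 ∧ q ≠ 0 ∧
      ∃ v : Matrix (Fin 2) (Fin 2) ℂ, vᴴ * v = 1 ∧ F = v * Fq q * vᵀ := by
  obtain ⟨ε, hε, hFε⟩ : ∃ ε : ℝ, (ε = 1 ∨ ε = -1) ∧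
      F * F.map (starRingEnd ℂ) = (ε : ℂ) • (1 : Matrix (Fin 2) (Fin 2) ℂ) := by
    rcases h with h | h
    · exact ⟨1, Or.inl rfl, by simpa using h⟩
    · exact ⟨-1, Or.inr rfl, by simpa using h⟩
  obtain ⟨q, hq1, hq2, hq0, hFq⟩ := exists_unitaryCongruent_Fq hε hFε
  refine ⟨q, ⟨hq1, hq2, hq0, hFq⟩, ?_⟩
  rintro p ⟨hp1, hp2, hp0, hFp⟩
  exact eq_of_unitaryCongruent_Fq (abs_le.mpr ⟨hp1, hp2⟩) hp0 (abs_le.mpr ⟨hq1, hq2⟩) hq0 hFp hFq
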